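/- For every solution of the reduced backward Ricci flow system of class U3S3 with A(0) = λ₁ > λ₃ = C(0), the quantity (A−C)/(AC²) is conserved, (A(t)−C(t))/(A(t)C(t)²) = (λ₁−λ₃)/(λ₁λ₃²) =: Λ for all t ∈ [0,T); consequently C(t) = (−1 + √(1 + 4ΛA(t)²))/(2ΛA(t)) and A(t)/2 + (1/(4√Λ))·arsinh(2√Λ·A(t)) = t + λ₁/2 + (1/(4√Λ))·arsinh(2√Λ·λ₁) for all t ∈ [0,T). -/

import Mathlib

open Real Set ENNReal

/-- The time domain `[0, T)` where `T ∈ (0, ∞]` is an extended nonnegative real. -/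
def flowDomain (T : ℝ≥0∞) : Set ℝ := {t : ℝ | 0 ≤ t ∧ ENNReal.ofReal t < T}

theorem flowDomain_convex (T : ℝ≥0∞) : Convex ℝ (flowDomain T) := by
  apply Set.OrdConnected.convex
  constructor
  rintro x ⟨hx, _⟩ y ⟨_, hy⟩ z ⟨h1, h2⟩
  exact ⟨hx.trans h1, lt_of_le_of_lt (ENNReal.ofReal_le_ofReal h2) hy⟩

theorem flowDomain_const (T : ℝ≥0∞) (hT : 0 < T) (f : ℝ → ℝ)
    (hf : ∀ t ∈ flowDomain T, HasDerivWithinAt f 0 (flowDomain T) t) :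
    ∀ t ∈ flowDomain T, f t = f 0 := by
  intro t ht
  have h0 : (0:ℝ) ∈ flowDomain T := ⟨le_rfl, by simpa using hT⟩
  have := (flowDomain_convex T).norm_image_sub_le_of_norm_hasDerivWithin_le (C := 0) hf
    (fun x _ => by simp) h0 ht
  rw [zero_mul] at this
  exact sub_eq_zero.1 (norm_le_zero_iff.1 this)

/-- For every solution of the reduced backward Ricci flow system of class `U3S3`
(case `A = B > C`) with `A(0) = λ₁ > λ₃ = C(0)`, the quantity `(A−C)/(AC²)` is conserved,
equal to `Λ = (λ₁−λ₃)/(λ₁λ₃²)`; consequently `C = (−1 + √(1 + 4ΛA²))/(2ΛA)` and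
`A/2 + (1/(4√Λ))·arsinh(2√Λ·A) = t + λ₁/2 + (1/(4√Λ))·arsinh(2√Λ·λ₁)` on `[0,T)`. -/
theorem stmt18 (T : ℝ≥0∞) (hT : 0 < T)
    (lam1 lam3 : ℝ) (hlam3 : 0 < lam3) (hlt : lam3 < lam1)
    (A C : ℝ → ℝ)
    (hpos : ∀ t ∈ flowDomain T, 0 < A t ∧ 0 < C t)
    (hA : ∀ t ∈ flowDomain T,
      HasDerivWithinAt A (2 - C t / A t) (flowDomain T) t)
    (hC : ∀ t ∈ flowDomain T,
      HasDerivWithinAt C (C t ^ 2 / A t ^ 2) (flowDomain T) t)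
    (hA0 : A 0 = lam1) (hC0 : C 0 = lam3) :
    ∀ t ∈ flowDomain T,
      (A t - C t) / (A t * C t ^ 2) = (lam1 - lam3) / (lam1 * lam3 ^ 2) ∧
      C t = (-1 + Real.sqrt (1 + 4 * ((lam1 - lam3) / (lam1 * lam3 ^ 2)) * A t ^ 2)) /
              (2 * ((lam1 - lam3) / (lam1 * lam3 ^ 2)) * A t) ∧
      A t / 2 + 1 / (4 * Real.sqrt ((lam1 - lam3) / (lam1 * lam3 ^ 2))) *
          Real.arsinh (2 * Real.sqrt ((lam1 - lam3) / (lam1 * lam3 ^ 2)) * A t) =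
        t + lam1 / 2 + 1 / (4 * Real.sqrt ((lam1 - lam3) / (lam1 * lam3 ^ 2))) *
          Real.arsinh (2 * Real.sqrt ((lam1 - lam3) / (lam1 * lam3 ^ 2)) * lam1) := by
  have hl1 : 0 < lam1 := hlam3.trans hlt
  have hcons : ∀ t ∈ flowDomain T,
      (A t - C t) / (A t * C t ^ 2) = (lam1 - lam3) / (lam1 * lam3 ^ 2) := by
    intro t ht
    have := flowDomain_const T hT (fun t => (A t - C t) / (A t * C t ^ 2)) (by
      intro s hs
      obtain ⟨ha, hc⟩ := hpos s hs
      have h := ((hA s hs).sub (hC s hs)).div ((hA s hs).mul ((hC s hs).pow 2))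
        (by simp only [Pi.mul_apply, Pi.pow_apply]; positivity)
      refine h.congr_deriv ?_
      simp only [Pi.mul_apply, Pi.pow_apply, Pi.sub_apply]
      field_simp
      push_cast
      ring) t ht
    simpa only [hA0, hC0] using this
  have hL : 0 < (lam1 - lam3) / (lam1 * lam3 ^ 2) := by
    have : 0 < lam1 - lam3 := sub_pos.2 hlt
    positivity
  generalize (lam1 - lam3) / (lam1 * lam3 ^ 2) = L at hcons hL ⊢
  have heq : ∀ t ∈ flowDomain T, A t - C t = L * (A t * C t ^ 2) := by
    intro t ht
    obtain ⟨ha, hc⟩ := hpos t ht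
    exact (div_eq_iff (by positivity)).1 (hcons t ht)
  have hsq : ∀ t ∈ flowDomain T, Real.sqrt (1 + 4 * L * A t ^ 2) = 1 + 2 * L * A t * C t := by
    intro t ht
    obtain ⟨ha, hc⟩ := hpos t ht
    rw [Real.sqrt_eq_iff_mul_self_eq (by positivity) (by positivity)]
    linear_combination (4 * L * A t) * heq t ht
  have hLs : 0 < Real.sqrt L := Real.sqrt_pos.2 hL
  have hLL : Real.sqrt L ^ 2 = L := Real.sq_sqrt hL.le
  intro t ht
  obtain ⟨ha, hc⟩ := hpos t ht
  refine ⟨hcons t ht, ?_, ?_⟩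
  · rw [hsq t ht]
    field_simp
    ring
  · have := flowDomain_const T hT (fun t => A t / 2 + 1 / (4 * Real.sqrt L) *
        Real.arsinh (2 * Real.sqrt L * A t) - t) (by
      intro s hs
      obtain ⟨ha, hc⟩ := hpos s hs
      have h := (((hA s hs).div_const 2).add ((((hA s hs).const_mul
        (2 * Real.sqrt L)).arsinh).const_mul (1 / (4 * Real.sqrt L)))).sub (hasDerivWithinAt_id s _)
      refine h.congr_deriv ?_
      have e : 1 + (2 * Real.sqrt L * A s) ^ 2 = 1 + 4 * L * A s ^ 2 := by
        rw [mul_pow, mul_pow, hLL]; ring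
      rw [e, hsq s hs, smul_eq_mul]
      have hp : 0 < 1 + 2 * L * A s * C s := by positivity
      field_simp
      linear_combination (8:ℝ) * heq s hs) t ht
    simp only [hA0] at this
    linarith
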